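/- Let d > 1 and let X be an ℝ^d-valued random variable with projection Lipschitz constant L_π and radial Lipschitz constant L_θ. Fix R > 0, ε > 0, δ > 0, and θ ∈ S^{d-1}, and let X^(n) = (X_1,…,X_n) be points of ℝ^d with ‖X_i‖ ≤ R for all i ≤ n. Let φ ∈ S^{d-1} satisfy |θ−φ| < ε·δ·(1+δ)^{-1}·(L_θ + L_π·R)^{-1}. If sup_{t ∈ ℝ} |F_θ(t) − F_{n,θ}(t)| < ε(1+δ)^{-1}, then sup_{t ∈ ℝ} |F_φ(t) − F_{n,φ}(t)| < ε. -/

import Mathlib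

open MeasureTheory RealInnerProductSpace

/-- The cdf of the projection of the random variable `X` in the direction `v`:
`F_v(t) = P(⟪X, v⟫ ≤ t)`. -/
noncomputable def projCdf {Ω : Type*} [MeasurableSpace Ω] {d : ℕ} (P : Measure Ω)
    (X : Ω → EuclideanSpace ℝ (Fin d)) (v : EuclideanSpace ℝ (Fin d)) (t : ℝ) : ℝ :=
  (P {ω | ⟪X ω, v⟫ ≤ t}).toReal

/-- The empirical cdf of a sample in the direction `v`:
`F_{n,v}(t) = n⁻¹ · #{i : ⟪Xs i, v⟫ ≤ t}`. -/
noncomputable def empCdf {d n : ℕ} (Xs : Fin n → EuclideanSpace ℝ (Fin d))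
    (v : EuclideanSpace ℝ (Fin d)) (t : ℝ) : ℝ :=
  (n : ℝ)⁻¹ * (Finset.univ.filter (fun i => ⟪Xs i, v⟫ ≤ t)).card

/-!
If two unit vectors are at angle `a`, the projections of a point of the ball of radius `R` on them
differ by at most `R * a`. Hence the empirical cdf in direction `φ` at `t` is squeezed between the
empirical cdfs in direction `θ` at `t - R * a` and `t + R * a`, and replacing `t ± R * a` by `t` in
the cdf of `X` costs `Lπ * R * a`. Passing from `θ` to `φ` in the cdf of `X` costs `Lθ * a` more.
The sample enters through its empirical measure, which is a finite measure carried by the ball.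
-/

open scoped NNReal

theorem abs_sub_le_of_shift_bounds {F G : ℝ → ℝ} {K S r t y : ℝ} (hr : 0 ≤ r)
    (hF : ∀ s t, |F s - F t| ≤ K * |s - t|) (hFG : ∀ s, |F s - G s| ≤ S)
    (hlower : G (t - r) ≤ y) (hupper : y ≤ G (t + r)) : |F t - y| ≤ S + K * r := by
  have hFleft : F t - F (t - r) ≤ K * r := by
    simpa only [sub_sub_cancel, abs_of_nonneg hr] using (le_abs_self _).trans (hF t (t - r))
  have hFright : F (t + r) - F t ≤ K * r := by
    simpa only [add_sub_cancel_left, abs_of_nonneg hr] using (le_abs_self _).trans (hF (t + r) t)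
  have hleft : F (t - r) - G (t - r) ≤ S := (le_abs_self _).trans (hFG _)
  have hright : -S ≤ F (t + r) - G (t + r) := neg_le_of_abs_le (hFG _)
  exact abs_le.2 ⟨by linarith, by linarith⟩

section EmpiricalMeasure

variable {ι E : Type*} [Fintype ι] [MeasurableSpace E]

/-- The empirical measure of a finite sample: each sample point carries the mass `1 / #ι`. For an
empty sample it is the zero measure. -/
noncomputable def empiricalMeasure (x : ι → E) : Measure E :=
  (Fintype.card ι : ℝ≥0)⁻¹ • ∑ i, Measure.dirac (x i)

instance (x : ι → E) : IsFiniteMeasure (empiricalMeasure x) :=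
  inferInstanceAs (IsFiniteMeasure ((Fintype.card ι : ℝ≥0)⁻¹ • ∑ i, Measure.dirac (x i)))

theorem ae_empiricalMeasure_of_forall {x : ι → E} {p : E → Prop}
    (hp : MeasurableSet {y | p y}) (h : ∀ i, p (x i)) :
    ∀ᵐ y ∂empiricalMeasure x, p y :=
  Measure.ae_smul_measure
    (ae_finsetSum_measure_iff.2 fun i _ => (ae_dirac_iff hp).2 (h i)) _

theorem empiricalMeasure_real_setOf (x : ι → E) {p : E → Prop}
    [DecidablePred p] (hp : MeasurableSet {y | p y}) :
    (empiricalMeasure x).real {y | p y}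
      = (Fintype.card ι : ℝ)⁻¹ * (Finset.univ.filter fun i => p (x i)).card := by
  have hsum : (∑ i, Measure.dirac (x i)) {y | p y} =
      (Finset.univ.filter fun i => p (x i)).card := by
    simp only [Measure.finsetSum_apply, Measure.dirac_apply' _ hp, Set.indicator_apply,
      Set.mem_ofPred_eq, Pi.one_apply, Finset.sum_boole]
  rw [empiricalMeasure, measureReal_nnreal_smul_apply, measureReal_def, hsum,
    ENNReal.toReal_natCast, NNReal.coe_inv, NNReal.coe_natCast]

end EmpiricalMeasure

section InnerProductSpace

variable {E : Type*} [SeminormedAddCommGroup E] [InnerProductSpace ℝ E]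

theorem norm_sub_le_arccos_inner {u v : E} (hu : ‖u‖ = 1) (hv : ‖v‖ = 1) :
    ‖u - v‖ ≤ Real.arccos ⟪u, v⟫ := by
  have hinner : |⟪u, v⟫| ≤ 1 := by
    simpa only [hu, hv, mul_one] using abs_real_inner_le_norm u v
  have hcos : 1 - Real.arccos ⟪u, v⟫ ^ 2 / 2 ≤ ⟪u, v⟫ := by
    simpa only [Real.cos_arccos (neg_le_of_abs_le hinner) (le_of_abs_le hinner)] using
      Real.one_sub_sq_div_two_le_cos (x := Real.arccos ⟪u, v⟫)
  refine le_of_sq_le_sq ?_ (Real.arccos_nonneg _)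
  calc ‖u - v‖ ^ 2 = 2 - 2 * ⟪u, v⟫ := by rw [norm_sub_sq_real, hu, hv]; ring
    _ ≤ Real.arccos ⟪u, v⟫ ^ 2 := by linarith

theorem inner_le_inner_add_of_norm_le {R : ℝ} {x : E} (hx : ‖x‖ ≤ R) (u v : E) :
    ⟪x, v⟫ ≤ ⟪x, u⟫ + R * ‖u - v‖ := by
  have h : ⟪x, v - u⟫ ≤ R * ‖v - u‖ :=
    (real_inner_le_norm x (v - u)).trans (by gcongr)
  rw [inner_sub_right, norm_sub_rev] at h
  linarith

variable [MeasurableSpace E]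

/-- The cdf of the projection in direction `v` of a measure `μ` on an inner product space, that is,
the `μ`-mass of the half-space `{x | ⟪x, v⟫ ≤ t}`. Taking for `μ` the law of a random vector or an
empirical measure gives the two kinds of cdf compared here. -/
noncomputable def halfspaceCdf (μ : Measure E) (v : E) (t : ℝ) : ℝ :=
  μ.real {x | ⟪x, v⟫ ≤ t}

/-- The Kolmogorov (uniform) distance between the cdfs of the projections of `μ` and `ν` in
direction `v`. It is a real supremum, which is meaningful for finite measures only. -/
noncomputable def projKolmogorovDist (μ ν : Measure E) (v : E) : ℝ :=
  ⨆ t : ℝ, |halfspaceCdf μ v t - halfspaceCdf ν v t|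

theorem measurableSet_inner_le [OpensMeasurableSpace E] (v : E) (t : ℝ) :
    MeasurableSet {x : E | ⟪x, v⟫ ≤ t} :=
  (isClosed_le (by fun_prop) continuous_const).measurableSet

theorem halfspaceCdf_le_halfspaceCdf_add {ν : Measure E} [IsFiniteMeasure ν] {R : ℝ}
    (hν : ∀ᵐ x ∂ν, ‖x‖ ≤ R) (u v : E) (t : ℝ) :
    halfspaceCdf ν u t ≤ halfspaceCdf ν v (t + R * ‖u - v‖) := by
  refine ENNReal.toReal_mono (measure_ne_top _ _) (measure_mono_ae ?_)
  filter_upwards [hν] with x hx hxt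
  exact (inner_le_inner_add_of_norm_le hx u v).trans (by gcongr; exact hxt)

theorem abs_halfspaceCdf_sub_le_projKolmogorovDist (μ ν : Measure E) [IsFiniteMeasure μ]
    [IsFiniteMeasure ν] (v : E) (t : ℝ) :
    |halfspaceCdf μ v t - halfspaceCdf ν v t| ≤ projKolmogorovDist μ ν v := by
  refine le_ciSup (f := fun t => |halfspaceCdf μ v t - halfspaceCdf ν v t|) ?_ t
  refine ⟨max (μ.real Set.univ) (ν.real Set.univ), Set.forall_mem_range.2 fun s => ?_⟩
  exact abs_sub_le_of_nonneg_of_le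
    measureReal_nonneg (le_max_of_le_left (measureReal_mono (Set.subset_univ _)))
    measureReal_nonneg (le_max_of_le_right (measureReal_mono (Set.subset_univ _)))

theorem projKolmogorovDist_le_add {μ ν : Measure E} [IsFiniteMeasure μ] [IsFiniteMeasure ν]
    {L K R : ℝ} (hR : 0 ≤ R) {θ φ : E}
    (hLip : ∀ s t, |halfspaceCdf μ θ s - halfspaceCdf μ θ t| ≤ K * |s - t|)
    (hdir : ∀ t, |halfspaceCdf μ θ t - halfspaceCdf μ φ t| ≤ L)
    (hν : ∀ᵐ x ∂ν, ‖x‖ ≤ R) :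
    projKolmogorovDist μ ν φ ≤ projKolmogorovDist μ ν θ + K * (R * ‖θ - φ‖) + L := by
  refine ciSup_le fun t => ?_
  have hlower : halfspaceCdf ν θ (t - R * ‖θ - φ‖) ≤ halfspaceCdf ν φ t := by
    simpa only [sub_add_cancel] using halfspaceCdf_le_halfspaceCdf_add hν θ φ (t - R * ‖θ - φ‖)
  have hupper : halfspaceCdf ν φ t ≤ halfspaceCdf ν θ (t + R * ‖θ - φ‖) := by
    simpa only [norm_sub_rev] using halfspaceCdf_le_halfspaceCdf_add hν φ θ t
  calc |halfspaceCdf μ φ t - halfspaceCdf ν φ t|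
      ≤ |halfspaceCdf μ φ t - halfspaceCdf μ θ t|
        + |halfspaceCdf μ θ t - halfspaceCdf ν φ t| := abs_sub_le _ _ _
    _ ≤ L + (projKolmogorovDist μ ν θ + K * (R * ‖θ - φ‖)) := by
        gcongr
        · exact abs_sub_comm (halfspaceCdf μ φ t) _ ▸ hdir t
        · exact abs_sub_le_of_shift_bounds (by positivity) hLip
            (abs_halfspaceCdf_sub_le_projKolmogorovDist μ ν θ) hlower hupper
    _ = projKolmogorovDist μ ν θ + K * (R * ‖θ - φ‖) + L := add_comm _ _

theorem projCdf_eq_halfspaceCdf_map {Ω : Type*} [MeasurableSpace Ω] {d : ℕ} (P : Measure Ω)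
    {X : Ω → EuclideanSpace ℝ (Fin d)} (hX : Measurable X) :
    projCdf P X = halfspaceCdf (P.map X) := by
  ext v t
  exact (map_measureReal_apply hX (measurableSet_inner_le v t)).symm

theorem empCdf_eq_halfspaceCdf_empiricalMeasure {d n : ℕ}
    (Xs : Fin n → EuclideanSpace ℝ (Fin d)) :
    empCdf Xs = halfspaceCdf (empiricalMeasure Xs) := by
  ext v t
  rw [halfspaceCdf, empiricalMeasure_real_setOf Xs (measurableSet_inner_le v t), Fintype.card_fin,
    empCdf]

theorem supDist_proj_lt_of_close_direction_general {μ ν : Measure E} [IsFiniteMeasure μ]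
    [IsFiniteMeasure ν] {Lpi Lth R ε δ : ℝ} (hLpi : 0 < Lpi) (hLth : 0 ≤ Lth) (hR : 0 < R)
    (hδ : 0 < δ) {θ φ : E} (hθ : ‖θ‖ = 1) (hφ : ‖φ‖ = 1)
    (hLipPi : ∀ s t, |halfspaceCdf μ θ s - halfspaceCdf μ θ t| ≤ Lpi * |s - t|)
    (hLipTh : ∀ t, |halfspaceCdf μ θ t - halfspaceCdf μ φ t| ≤ Lth * Real.arccos ⟪θ, φ⟫)
    (hclose : Real.arccos ⟪θ, φ⟫ < ε * δ * (1 + δ)⁻¹ * (Lth + Lpi * R)⁻¹)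
    (hν : ∀ᵐ x ∂ν, ‖x‖ ≤ R) (hdist : projKolmogorovDist μ ν θ < ε * (1 + δ)⁻¹) :
    projKolmogorovDist μ ν φ < ε := by
  have hcost : (Lth + Lpi * R) * Real.arccos ⟪θ, φ⟫ < ε * δ * (1 + δ)⁻¹ := by
    rwa [← div_eq_mul_inv _ (Lth + Lpi * R), lt_div_iff₀' (by positivity)] at hclose
  calc projKolmogorovDist μ ν φ
      ≤ projKolmogorovDist μ ν θ + Lpi * (R * ‖θ - φ‖) + Lth * Real.arccos ⟪θ, φ⟫ :=
        projKolmogorovDist_le_add hR.le hLipPi hLipTh hν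
    _ ≤ projKolmogorovDist μ ν θ + Lpi * (R * Real.arccos ⟪θ, φ⟫)
        + Lth * Real.arccos ⟪θ, φ⟫ := by
        gcongr
        exact norm_sub_le_arccos_inner hθ hφ
    _ = projKolmogorovDist μ ν θ + (Lth + Lpi * R) * Real.arccos ⟪θ, φ⟫ := by ring
    _ < ε * (1 + δ)⁻¹ + ε * δ * (1 + δ)⁻¹ := add_lt_add hdist hcost
    _ = ε := by field_simp

end InnerProductSpace

/-- If `|θ−φ| < ε·δ·(1+δ)⁻¹·(L_θ + L_π·R)⁻¹` and the sup-distance between `F_θ` and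
`F_{n,θ}` is less than `ε(1+δ)⁻¹`, then the sup-distance between `F_φ` and `F_{n,φ}` is
less than `ε`. -/
theorem supDist_proj_lt_of_close_direction {d : ℕ} (hd1 : 1 < d)
    {Ω : Type*} [MeasurableSpace Ω] (P : Measure Ω) [IsProbabilityMeasure P]
    (X : Ω → EuclideanSpace ℝ (Fin d)) (hX : Measurable X)
    (Lpi Lth : ℝ) (hLpi : 0 < Lpi) (hLth : 0 ≤ Lth)
    (hLipPi : ∀ v : EuclideanSpace ℝ (Fin d), ‖v‖ = 1 →
      ∀ s t : ℝ, |projCdf P X v s - projCdf P X v t| ≤ Lpi * |s - t|)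
    (hLipTh : ∀ t : ℝ, ∀ u v : EuclideanSpace ℝ (Fin d), ‖u‖ = 1 → ‖v‖ = 1 →
      |projCdf P X u t - projCdf P X v t| ≤ Lth * Real.arccos ⟪u, v⟫)
    (R ε δ : ℝ) (hR : 0 < R) (hε : 0 < ε) (hδ : 0 < δ)
    (θ φ : EuclideanSpace ℝ (Fin d)) (hθ : ‖θ‖ = 1) (hφ : ‖φ‖ = 1)
    (hclose : Real.arccos ⟪θ, φ⟫ < ε * δ * (1 + δ)⁻¹ * (Lth + Lpi * R)⁻¹)
    {n : ℕ} (Xs : Fin n → EuclideanSpace ℝ (Fin d)) (hXs : ∀ i, ‖Xs i‖ ≤ R)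
    (hsup : (⨆ t : ℝ, |projCdf P X θ t - empCdf Xs θ t|) < ε * (1 + δ)⁻¹) :
    (⨆ t : ℝ, |projCdf P X φ t - empCdf Xs φ t|) < ε := by
  rw [projCdf_eq_halfspaceCdf_map P hX] at hLipPi hLipTh hsup ⊢
  rw [empCdf_eq_halfspaceCdf_empiricalMeasure Xs] at hsup ⊢
  exact supDist_proj_lt_of_close_direction_general hLpi hLth hR hδ hθ hφ (hLipPi θ hθ)
    (fun t => hLipTh t θ φ hθ hφ) hclose
    (ae_empiricalMeasure_of_forall (measurableSet_le measurable_norm measurable_const) hXs) hsup
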